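/- arXiv:2209.15130 — 2 statements merged into one kernel-verified Lean document; each statement's English description precedes it below -/
import Mathlib

section
/- Let X, X* ∈ ℝ^{p×p} be symmetric positive semidefinite matrices of rank r, and let 0 ≤ μ' < 1 satisfy ‖X − X*‖_F ≤ μ'·λ_r(X*), where λ_r(X*) denotes the r-th largest eigenvalue of X*. Write X = UΣUᵀ with U ∈ ℝ^{p×r}, UᵀU = I_r, and Σ an r×r diagonal matrix with positive diagonal entries, and let U⊥ ∈ ℝ^{p×(p−r)} be a matrix whose columns form an orthonormal basis of the orthogonal complement of the column space of U. Then for every symmetric S ∈ ℝ^{r×r} and every D ∈ ℝ^{(p−r)×r}, the matrix ξ := U S Uᵀ + U⊥ D Uᵀ + U Dᵀ U⊥ᵀ (a tangent vector at X of the embedded manifold of rank-r positive semidefinite matrices) satisfies ‖ξ‖²_F + 2⟨X − X*, U⊥ D Σ⁻¹ Dᵀ U⊥ᵀ⟩ ≥ (1 − 2μ'/(1 − μ'))·‖ξ‖²_F. (The left-hand side is the Riemannian Hessian quadratic form of X ↦ (1/2)‖X − X*‖²_F on the embedded manifold, evaluated at ξ.) -/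
open Matrix

/-- Trace inner product `⟨A,B⟩ = tr(AᵀB)`. -/
noncomputable def trInner {m n : ℕ} (A B : Matrix (Fin m) (Fin n) ℝ) : ℝ :=
  ∑ i, ∑ j, A i j * B i j

/-- Frobenius norm. -/
noncomputable def frob {m n : ℕ} (A : Matrix (Fin m) (Fin n) ℝ) : ℝ :=
  Real.sqrt (∑ i, ∑ j, (A i j) ^ 2)

open scoped Classical in
/-- The `i`-th largest eigenvalue (1-indexed, `1 ≤ i ≤ n`) of a Hermitian matrix; junk value 0
otherwise. -/
noncomputable def eigVal {n : ℕ} (A : Matrix (Fin n) (Fin n) ℝ) (i : ℕ) : ℝ :=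
  if hA : A.IsHermitian then
    if h : n - i < n then hA.eigenvalues (Tuple.sort hA.eigenvalues ⟨n - i, h⟩) else 0
  else 0

/-- The `i`-th largest singular value (1-indexed) of `Y`, so `sval Y 1 = ‖Y‖` (spectral norm)
and `sval Y r` is the least singular value. -/
noncomputable def sval {p r : ℕ} (Y : Matrix (Fin p) (Fin r) ℝ) (i : ℕ) : ℝ :=
  Real.sqrt (eigVal (Yᵀ * Y) i)

/-- `Q` is an orthogonal matrix. -/
def IsOrtho {r : ℕ} (Q : Matrix (Fin r) (Fin r) ℝ) : Prop := Qᵀ * Q = 1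

/-- The quotient distance `d(Y₁,Y₂) = min_{Q ∈ O(r)} ‖Y₂Q − Y₁‖_F`. -/
noncomputable def dOrth {p r : ℕ} (Y₁ Y₂ : Matrix (Fin p) (Fin r) ℝ) : ℝ :=
  sInf {c | ∃ Q : Matrix (Fin r) (Fin r) ℝ, IsOrtho Q ∧ c = frob (Y₂ * Q - Y₁)}

/-!
Write `E = X - Xstar` and `W = Uperp * D`. Since `Uᵀ * W = 0`, the three summands of
`ξ = U * S * Uᵀ + W * Uᵀ + U * Wᵀ` are mutually orthogonal, so `2‖W‖² ≤ ‖ξ‖²`. The curvature term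
`⟨E, W * Σ⁻¹ * Wᵀ⟩` is a sum over the columns `w` of `W` of the values `σ⁻¹ * (w ⬝ᵥ E *ᵥ w)`, each
at most `σ⁻¹ * ‖E‖ * ‖w‖²` in absolute value. Weyl's inequality bounds every `σ` below by
`λ_r(Xstar) - ‖E‖`, and together with `‖E‖ ≤ μ' * λ_r(Xstar)` this gives
`σ⁻¹ * ‖E‖ ≤ μ' / (1 - μ')`. Since `W` is counted twice in `‖ξ‖²`, the constant `μ' / (1 - μ')`
already works in place of `2 * μ' / (1 - μ')`.
-/

section QuadraticForm

lemma mul_diagonal_mul_transpose_eq_sum {m n R : Type*} [CommSemiring R]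
    [Fintype n] [DecidableEq n] (W : Matrix m n R) (d : n → R) :
    W * diagonal d * Wᵀ = ∑ j, d j • vecMulVec (W.col j) (W.col j) := by
  ext a b
  rw [Matrix.sum_apply, mul_apply]
  refine Finset.sum_congr rfl fun j _ => ?_
  rw [mul_diagonal, transpose_apply, Matrix.smul_apply, vecMulVec_apply, col_apply, col_apply,
    smul_eq_mul]
  ring

variable {m n : Type*} [Fintype m]

lemma dotProduct_mul_diagonal_mul_transpose_mulVec [Fintype n] [DecidableEq n] {R : Type*}
    [CommSemiring R] (A : Matrix m n R) (d : n → R) (v : m → R) :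
    v ⬝ᵥ (A * diagonal d * Aᵀ) *ᵥ v = ∑ j, d j * (Aᵀ *ᵥ v) j ^ 2 := by
  rw [← mulVec_mulVec, ← mulVec_mulVec, dotProduct_mulVec, ← mulVec_transpose]
  simp only [dotProduct, mulVec_diagonal]
  exact Finset.sum_congr rfl fun j _ => by ring

lemma sq_transpose_mulVec_le_dotProduct_self [DecidableEq n] {U : Matrix m n ℝ} (hU : Uᵀ * U = 1)
    (v : m → ℝ) (j : n) : (Uᵀ *ᵥ v) j ^ 2 ≤ v ⬝ᵥ v := by
  have unit_col : ∑ k, U k j ^ 2 = 1 := by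
    simpa [mul_apply, ← sq] using congrFun (congrFun hU j) j
  calc (Uᵀ *ᵥ v) j ^ 2 = (∑ k, U k j * v k) ^ 2 := rfl
    _ ≤ (∑ k, U k j ^ 2) * ∑ k, v k ^ 2 := Finset.sum_mul_sq_le_sq_mul_sq ..
    _ = v ⬝ᵥ v := by rw [unit_col, one_mul, dotProduct]; simp only [sq]

end QuadraticForm

section Frobenius

variable {m n : ℕ}

lemma frob_nonneg (A : Matrix (Fin m) (Fin n) ℝ) : 0 ≤ frob A := Real.sqrt_nonneg _

lemma trInner_eq_trace (A B : Matrix (Fin m) (Fin n) ℝ) : trInner A B = (Aᵀ * B).trace := by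
  simp only [trInner, trace, diag, mul_apply, transpose_apply]
  exact Finset.sum_comm

lemma frob_sq_eq_trInner_self (A : Matrix (Fin m) (Fin n) ℝ) : frob A ^ 2 = trInner A A := by
  simp only [frob, trInner, ← sq]
  exact Real.sq_sqrt (by positivity)

lemma frob_sq_eq_trace (A : Matrix (Fin m) (Fin n) ℝ) : frob A ^ 2 = (Aᵀ * A).trace := by
  rw [frob_sq_eq_trInner_self, trInner_eq_trace]

lemma frob_sq_eq_sum_col (A : Matrix (Fin m) (Fin n) ℝ) :
    frob A ^ 2 = ∑ j, A.col j ⬝ᵥ A.col j := frob_sq_eq_trace A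

lemma abs_trInner_le_frob_mul_frob (A B : Matrix (Fin m) (Fin n) ℝ) :
    |trInner A B| ≤ frob A * frob B := by
  refine abs_le_of_sq_le_sq ?_ (mul_nonneg (frob_nonneg A) (frob_nonneg B))
  rw [mul_pow, frob_sq_eq_trInner_self, frob_sq_eq_trInner_self]
  simp only [trInner, ← Fintype.sum_prod_type', ← sq]
  exact Finset.sum_mul_sq_le_sq_mul_sq ..

lemma trInner_vecMulVec (E : Matrix (Fin m) (Fin n) ℝ) (v : Fin m → ℝ) (w : Fin n → ℝ) :
    trInner E (vecMulVec v w) = v ⬝ᵥ E *ᵥ w := by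
  simp only [trInner, vecMulVec_apply, dotProduct, mulVec, Finset.mul_sum]
  exact Finset.sum_congr rfl fun i _ => Finset.sum_congr rfl fun j _ => by ring

lemma frob_vecMulVec_self (v : Fin n → ℝ) : frob (vecMulVec v v) = v ⬝ᵥ v := by
  refine (sq_eq_sq₀ (frob_nonneg _) (dotProduct_self_star_nonneg v)).1 ?_
  rw [frob_sq_eq_trInner_self, trInner_vecMulVec, vecMulVec_mulVec]
  simp [sq]

lemma abs_dotProduct_mulVec_self_le (E : Matrix (Fin n) (Fin n) ℝ) (v : Fin n → ℝ) :
    |v ⬝ᵥ E *ᵥ v| ≤ frob E * (v ⬝ᵥ v) := by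
  simpa only [trInner_vecMulVec, frob_vecMulVec_self] using
    abs_trInner_le_frob_mul_frob E (vecMulVec v v)

lemma trInner_mul_diagonal_mul_transpose (E : Matrix (Fin m) (Fin m) ℝ)
    (W : Matrix (Fin m) (Fin n) ℝ) (d : Fin n → ℝ) :
    trInner E (W * diagonal d * Wᵀ) = ∑ j, d j * (W.col j ⬝ᵥ E *ᵥ W.col j) := by
  rw [mul_diagonal_mul_transpose_eq_sum, trInner_eq_trace, Matrix.mul_sum, trace_sum]
  refine Finset.sum_congr rfl fun j _ => ?_
  rw [Matrix.mul_smul, trace_smul, ← trInner_eq_trace, trInner_vecMulVec, smul_eq_mul]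

lemma abs_trInner_mul_diagonal_mul_transpose_le {E : Matrix (Fin m) (Fin m) ℝ}
    {d : Fin n → ℝ} {c : ℝ} (hd : ∀ j, |d j| * frob E ≤ c) (W : Matrix (Fin m) (Fin n) ℝ) :
    |trInner E (W * diagonal d * Wᵀ)| ≤ c * frob W ^ 2 := by
  rw [trInner_mul_diagonal_mul_transpose, frob_sq_eq_sum_col, Finset.mul_sum]
  refine (Finset.abs_sum_le_sum_abs _ _).trans (Finset.sum_le_sum fun j _ => ?_)
  calc |d j * (W.col j ⬝ᵥ E *ᵥ W.col j)|
      ≤ |d j| * (frob E * (W.col j ⬝ᵥ W.col j)) := by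
        rw [abs_mul]
        gcongr
        exact abs_dotProduct_mulVec_self_le E _
    _ = |d j| * frob E * (W.col j ⬝ᵥ W.col j) := by ring
    _ ≤ c * (W.col j ⬝ᵥ W.col j) :=
        mul_le_mul_of_nonneg_right (hd j) (dotProduct_self_star_nonneg (W.col j))

lemma frob_sq_tangent {U : Matrix (Fin m) (Fin n) ℝ} (hU : Uᵀ * U = 1)
    {W : Matrix (Fin m) (Fin n) ℝ} (hUW : Uᵀ * W = 0) (S : Matrix (Fin n) (Fin n) ℝ) :
    frob (U * S * Uᵀ + W * Uᵀ + U * Wᵀ) ^ 2 = frob S ^ 2 + 2 * frob W ^ 2 := by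
  have hWU : Wᵀ * U = 0 := by simpa using congrArg transpose hUW
  set ξ := U * S * Uᵀ + W * Uᵀ + U * Wᵀ with hξ
  have transpose_U_mul : Uᵀ * ξ = S * Uᵀ + Wᵀ := by
    simp only [hξ, Matrix.mul_add, ← Matrix.mul_assoc, hU, hUW, Matrix.one_mul, Matrix.zero_mul,
      add_zero]
  have transpose_W_mul : Wᵀ * ξ = Wᵀ * W * Uᵀ := by
    simp only [hξ, Matrix.mul_add, ← Matrix.mul_assoc, hWU, Matrix.zero_mul, zero_add, add_zero]
  have gram : ξᵀ * ξ = (U * Sᵀ + W) * (S * Uᵀ + Wᵀ) + U * (Wᵀ * W * Uᵀ) := by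
    have transpose_ξ : ξᵀ = (U * Sᵀ + W) * Uᵀ + U * Wᵀ := by
      simp only [hξ, transpose_add, transpose_mul, transpose_transpose, Matrix.add_mul,
        Matrix.mul_assoc]
      abel
    rw [transpose_ξ, Matrix.add_mul, Matrix.mul_assoc, Matrix.mul_assoc U, transpose_U_mul,
      transpose_W_mul]
  simp only [frob_sq_eq_trace, gram, Matrix.add_mul, Matrix.mul_add, trace_add]
  have cross_left : (U * Sᵀ * Wᵀ).trace = 0 := by rw [trace_mul_cycle, hWU]; simp
  have cross_right : (W * (S * Uᵀ)).trace = 0 := by rw [trace_mul_comm, Matrix.mul_assoc, hUW]; simp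
  have diag_S : (U * Sᵀ * (S * Uᵀ)).trace = (Sᵀ * S).trace := by
    rw [← Matrix.mul_assoc, trace_mul_comm]; simp only [← Matrix.mul_assoc, hU, Matrix.one_mul]
  have diag_W : (U * (Wᵀ * W * Uᵀ)).trace = (Wᵀ * W).trace := by
    rw [trace_mul_comm, Matrix.mul_assoc, hU, Matrix.mul_one]
  rw [cross_left, cross_right, diag_S, diag_W, trace_mul_comm W]
  ring

end Frobenius

section Eigenvalue

variable {n r : ℕ} {A B : Matrix (Fin n) (Fin n) ℝ}

lemma exists_orthogonal_eq_mul_diagonal_eigenvalues (hA : A.IsHermitian) :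
    ∃ V : Matrix (Fin n) (Fin n) ℝ, Vᵀ * V = 1 ∧ A = V * diagonal hA.eigenvalues * Vᵀ := by
  refine ⟨hA.eigenvectorUnitary, ?_, ?_⟩
  · simpa [star_eq_conjTranspose] using mem_unitaryGroup_iff'.1 hA.eigenvectorUnitary.2
  · simpa [Unitary.conjStarAlgAut_apply, star_eq_conjTranspose, Function.comp_def] using
      hA.spectral_theorem

lemma exists_orthogonal_eq_mul_diagonal_monotone (hA : A.IsHermitian) :
    ∃ (Q : Matrix (Fin n) (Fin n) ℝ) (ev : Fin n → ℝ), Qᵀ * Q = 1 ∧ Monotone ev ∧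
      A = Q * diagonal ev * Qᵀ ∧ ∀ (k : ℕ) (hk : n - k < n), eigVal A k = ev ⟨n - k, hk⟩ := by
  obtain ⟨V, hV, A_eq⟩ := exists_orthogonal_eq_mul_diagonal_eigenvalues hA
  let σ := Tuple.sort hA.eigenvalues
  refine ⟨V.submatrix id σ, hA.eigenvalues ∘ σ, ?_, Tuple.monotone_sort _, ?_, fun k hk => ?_⟩
  · rw [transpose_submatrix, ← Equiv.coe_refl, submatrix_mul_equiv, hV, submatrix_one_equiv]
  · rw [← submatrix_diagonal_equiv, transpose_submatrix, submatrix_mul_equiv, submatrix_mul_equiv,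
      ← A_eq, submatrix_id_id]
  · rw [eigVal, dif_pos hA, dif_pos hk, Function.comp_apply]

/-- One half of the Courant–Fischer principle; `n - r` truncates for `n < r`, as in `eigVal`. -/
lemma exists_mem_eigVal_mul_le_dotProduct_mulVec (hA : A.IsHermitian)
    {K : Submodule ℝ (Fin n → ℝ)} (hK : n - r < Module.finrank ℝ K) :
    ∃ v ∈ K, v ≠ 0 ∧ eigVal A r * (v ⬝ᵥ v) ≤ v ⬝ᵥ A *ᵥ v := by
  obtain ⟨Q, ev, hQ, ev_mono, A_eq, eigVal_eq⟩ := exists_orthogonal_eq_mul_diagonal_monotone hA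
  have hlt : n - r < n := hK.trans_le (by simpa using K.finrank_le)
  let lowCoords : K →ₗ[ℝ] (Fin (n - r) → ℝ) :=
    LinearMap.funLeft ℝ ℝ (Fin.castLE hlt.le) ∘ₗ Qᵀ.mulVecLin ∘ₗ K.subtype
  obtain ⟨v, hv, hv0⟩ := (Submodule.ne_bot_iff _).1
    (lowCoords.ker_ne_bot_of_finrank_lt (by simpa using hK))
  have low_eq_zero (k : Fin n) (hk : (k : ℕ) < n - r) : (Qᵀ *ᵥ v.1) k = 0 :=
    congrFun (LinearMap.mem_ker.1 hv) ⟨k, hk⟩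
  have parseval : v.1 ⬝ᵥ v.1 = ∑ k, (Qᵀ *ᵥ v.1) k ^ 2 := by
    simpa [mul_eq_one_comm.1 hQ] using
      dotProduct_mul_diagonal_mul_transpose_mulVec Q (fun _ => 1) v.1
  refine ⟨v, v.2, by simpa using hv0, ?_⟩
  calc eigVal A r * (v.1 ⬝ᵥ v.1) = ∑ k, ev ⟨n - r, hlt⟩ * (Qᵀ *ᵥ v.1) k ^ 2 := by
        rw [eigVal_eq r hlt, parseval, Finset.mul_sum]
    _ ≤ ∑ k, ev k * (Qᵀ *ᵥ v.1) k ^ 2 := Finset.sum_le_sum fun k _ => ?_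
    _ = v.1 ⬝ᵥ A *ᵥ v.1 := by rw [A_eq, dotProduct_mul_diagonal_mul_transpose_mulVec]
  rcases lt_or_ge (k : ℕ) (n - r) with hk | hk
  · simp [low_eq_zero k hk]
  · exact mul_le_mul_of_nonneg_right (ev_mono hk) (sq_nonneg _)

lemma eigVal_le_add_frob_sub (hB : B.IsHermitian) {K : Submodule ℝ (Fin n → ℝ)}
    (hK : n - r < Module.finrank ℝ K) {c : ℝ} (hc : ∀ v ∈ K, v ⬝ᵥ A *ᵥ v ≤ c * (v ⬝ᵥ v)) :
    eigVal B r ≤ c + frob (A - B) := by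
  obtain ⟨v, hvK, hv0, hv⟩ := exists_mem_eigVal_mul_le_dotProduct_mulVec hB hK
  have perturb : -(frob (A - B) * (v ⬝ᵥ v)) ≤ v ⬝ᵥ A *ᵥ v - v ⬝ᵥ B *ᵥ v := by
    simpa only [sub_mulVec, dotProduct_sub] using
      (abs_le.1 (abs_dotProduct_mulVec_self_le (A - B) v)).1
  have hvpos : 0 < v ⬝ᵥ v := dotProduct_self_star_pos_iff.2 hv0
  refine le_of_mul_le_mul_right ?_ hvpos
  linarith [hc v hvK]

/-- Weyl's inequality for an explicitly diagonalized matrix. The test space is the orthogonal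
complement of all columns of `U` but the `i`-th, so `dg` need not be sorted. -/
lemma eigVal_le_diag_add_frob_sub (hB : B.IsHermitian) {U : Matrix (Fin n) (Fin r) ℝ}
    (hU : Uᵀ * U = 1) {dg : Fin r → ℝ} (hA : A = U * diagonal dg * Uᵀ) {i : Fin r}
    (hi : 0 ≤ dg i) : eigVal B r ≤ dg i + frob (A - B) := by
  have r_le_n : r ≤ n := by
    have := U.rank_le_height
    rwa [← rank_transpose_mul_self, hU, rank_one, Fintype.card_fin] at this
  let otherCoords : (Fin n → ℝ) →ₗ[ℝ] ({j : Fin r // j ≠ i} → ℝ) :=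
    LinearMap.funLeft ℝ ℝ Subtype.val ∘ₗ Uᵀ.mulVecLin
  have finrank_ker : n - r < Module.finrank ℝ (LinearMap.ker otherCoords) := by
    have rank_nullity := otherCoords.finrank_range_add_finrank_ker
    have finrank_range := (LinearMap.range otherCoords).finrank_le
    simp only [ne_eq, Module.finrank_fintype_fun_eq_card, Fintype.card_fin,
      Fintype.card_subtype_compl, Fintype.card_unique] at rank_nullity finrank_range
    have := i.pos
    omega
  refine eigVal_le_add_frob_sub hB finrank_ker fun v hv => ?_
  have other_eq_zero (j : Fin r) (hj : j ≠ i) : (Uᵀ *ᵥ v) j = 0 :=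
    congrFun (LinearMap.mem_ker.1 hv) ⟨j, hj⟩
  calc v ⬝ᵥ A *ᵥ v = ∑ j, dg j * (Uᵀ *ᵥ v) j ^ 2 := by
        rw [hA, dotProduct_mul_diagonal_mul_transpose_mulVec]
    _ = dg i * (Uᵀ *ᵥ v) i ^ 2 :=
        Fintype.sum_eq_single i fun j hj => by simp [other_eq_zero j hj]
    _ ≤ dg i * (v ⬝ᵥ v) := by
        gcongr
        exact sq_transpose_mulVec_le_dotProduct_self hU v i

end Eigenvalue

theorem stmt18_general {p q r : ℕ} {X Xstar : Matrix (Fin p) (Fin p) ℝ}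
    (hXstar : Xstar.IsHermitian) {μ' : ℝ} (hμ0 : 0 ≤ μ') (hμ1 : μ' < 1)
    (hclose : frob (X - Xstar) ≤ μ' * eigVal Xstar r)
    {U : Matrix (Fin p) (Fin r) ℝ} (hU : Uᵀ * U = 1)
    {dg : Fin r → ℝ} (hdg : ∀ i, 0 < dg i) (hdecomp : X = U * diagonal dg * Uᵀ)
    {P : Matrix (Fin p) (Fin q) ℝ} (hUP : Uᵀ * P = 0)
    (S : Matrix (Fin r) (Fin r) ℝ) (D : Matrix (Fin q) (Fin r) ℝ) :
    frob (U * S * Uᵀ + P * D * Uᵀ + U * Dᵀ * Pᵀ) ^ 2 +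
        2 * trInner (X - Xstar) (P * D * diagonal (fun i => (dg i)⁻¹) * Dᵀ * Pᵀ) ≥
      (1 - μ' / (1 - μ')) * frob (U * S * Uᵀ + P * D * Uᵀ + U * Dᵀ * Pᵀ) ^ 2 := by
  have inv_mul_le (i : Fin r) : |(dg i)⁻¹| * frob (X - Xstar) ≤ μ' / (1 - μ') := by
    have weyl := eigVal_le_diag_add_frob_sub hXstar hU hdecomp (hdg i).le
    rw [abs_of_pos (inv_pos.2 (hdg i)), inv_mul_eq_div, div_le_div_iff₀ (hdg i) (by linarith)]
    linarith [mul_le_mul_of_nonneg_left weyl hμ0]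
  have hUPD : Uᵀ * (P * D) = 0 := by rw [← Matrix.mul_assoc, hUP, Matrix.zero_mul]
  have curvature := neg_le_of_abs_le (abs_trInner_mul_diagonal_mul_transpose_le inv_mul_le (P * D))
  have norm_sq := frob_sq_tangent hU hUPD S
  simp only [transpose_mul, ← Matrix.mul_assoc] at curvature norm_sq
  have S_term_nonneg : 0 ≤ μ' / (1 - μ') * frob S ^ 2 :=
    mul_nonneg (div_nonneg hμ0 (by linarith)) (sq_nonneg _)
  rw [norm_sq]
  linarith

/-- positive definiteness radius of the Riemannian Hessian under the embedded
geometry: lower bound on the embedded Riemannian Hessian quadratic form of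
`X ↦ ½‖X - Xstar‖_F²` at tangent vectors of the manifold of rank-r PSD matrices. -/
theorem stmt18 {p r : ℕ} (hrp : r ≤ p)
    (X Xstar : Matrix (Fin p) (Fin p) ℝ)
    (hXpsd : X.PosSemidef) (hXr : X.rank = r)
    (hXspsd : Xstar.PosSemidef) (hXsr : Xstar.rank = r)
    (μ' : ℝ) (hμ0 : 0 ≤ μ') (hμ1 : μ' < 1)
    (hclose : frob (X - Xstar) ≤ μ' * eigVal Xstar r)
    (U : Matrix (Fin p) (Fin r) ℝ) (hU : Uᵀ * U = 1)
    (dg : Fin r → ℝ) (hdg : ∀ i, 0 < dg i)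
    (hdecomp : X = U * Matrix.diagonal dg * Uᵀ)
    (Uperp : Matrix (Fin p) (Fin (p - r)) ℝ)
    (hUp : Uperpᵀ * Uperp = 1) (hUUp : Uᵀ * Uperp = 0) :
    ∀ S : Matrix (Fin r) (Fin r) ℝ, S.IsSymm →
      ∀ D : Matrix (Fin (p - r)) (Fin r) ℝ,
        (frob (U * S * Uᵀ + Uperp * D * Uᵀ + U * Dᵀ * Uperpᵀ)) ^ 2 +
            2 * trInner (X - Xstar)
              (Uperp * D * Matrix.diagonal (fun i => (dg i)⁻¹) * Dᵀ * Uperpᵀ) ≥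
          (1 - 2 * μ' / (1 - μ')) *
            (frob (U * S * Uᵀ + Uperp * D * Uᵀ + U * Dᵀ * Uperpᵀ)) ^ 2 := fun S _ D =>
  (mul_le_mul_of_nonneg_right (by gcongr; linarith) (sq_nonneg _)).trans
    (stmt18_general hXspsd.1 hμ0 hμ1 hclose hU hdg hdecomp hUUp S D)
end

section
/- Let Y₁, Y₂ ∈ ℝ^{p×r}_* with d(Y₁,Y₂) ≤ σ_r(Y₂)/3. Then ‖Y₁Y₁ᵀ − Y₂Y₂ᵀ‖_F ≤ (7/3)·‖Y₂‖·d(Y₁,Y₂). -/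
open Matrix

/-!
Let `Q` be an orthogonal matrix attaining `d(Y₁, Y₂)`; it exists because `O(r)` is compact.
Replacing `Y₂` by `Z = Y₂ Q` does not change `Y₂ Y₂ᵀ`, and with `E = Y₁ - Z` one has
`Y₁ Y₁ᵀ - Z Zᵀ = Z Eᵀ + E Zᵀ + E Eᵀ`, whence `‖Y₁ Y₁ᵀ - Y₂ Y₂ᵀ‖_F ≤ 2 ‖Y₂‖ d + d²`. When
`d ≤ ‖Y₂‖ / 3`, the quadratic term is at most `‖Y₂‖ d / 3`, and `2 + 1 / 3 = 7 / 3`.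
-/

section Matrices

open scoped Matrix.Norms.Frobenius MatrixOrder ComplexOrder

variable {l m n 𝕜 : Type*} [Fintype l] [Fintype m] [Fintype n] [RCLike 𝕜]

lemma frobenius_norm_eq_sqrt (A : Matrix m n 𝕜) : ‖A‖ = √(∑ i, ∑ j, ‖A i j‖ ^ 2) := by
  simp [frobenius_norm_def, Real.sqrt_eq_rpow]

lemma frobenius_norm_sq_eq_re_trace (A : Matrix m n 𝕜) :
    ‖A‖ ^ 2 = RCLike.re (Aᴴ * A).trace := by
  rw [frobenius_norm_eq_sqrt, Real.sq_sqrt (by positivity), Finset.sum_comm]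
  simp only [trace, diag_apply, mul_apply, conjTranspose_apply, RCLike.star_def, RCLike.conj_mul,
    map_sum, ← RCLike.ofReal_pow, RCLike.ofReal_re]

lemma frobenius_norm_mul_of_conjTranspose_mul_self_eq_one [DecidableEq m] {U : Matrix l m 𝕜}
    (hU : Uᴴ * U = 1) (B : Matrix m n 𝕜) : ‖U * B‖ = ‖B‖ := by
  have gram_eq : (U * B)ᴴ * (U * B) = Bᴴ * B := by
    rw [conjTranspose_mul, Matrix.mul_assoc, ← Matrix.mul_assoc Uᴴ, hU, Matrix.one_mul]
  rw [← sq_eq_sq₀ (norm_nonneg _) (norm_nonneg _), frobenius_norm_sq_eq_re_trace, gram_eq,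
    frobenius_norm_sq_eq_re_trace]

lemma frobenius_norm_mul_sq_le_of_conjTranspose_mul_self_le [DecidableEq m] {A : Matrix l m 𝕜}
    {c : ℝ} (hA : Aᴴ * A ≤ algebraMap ℝ _ c) (B : Matrix m n 𝕜) :
    ‖A * B‖ ^ 2 ≤ c * ‖B‖ ^ 2 := by
  have gap_eq : Bᴴ * (algebraMap ℝ _ c - Aᴴ * A) * B = c • (Bᴴ * B) - (A * B)ᴴ * (A * B) := by
    simp [Algebra.algebraMap_eq_smul_one, Matrix.mul_sub, Matrix.sub_mul, Matrix.mul_assoc]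
  have trace_gap_nonneg : 0 ≤ RCLike.re (c • (Bᴴ * B) - (A * B)ᴴ * (A * B)).trace := by
    rw [← gap_eq]
    exact (RCLike.nonneg_iff.mp (PosSemidef.conjTranspose_mul_mul_same hA B).trace_nonneg).1
  rw [trace_sub, trace_smul, map_sub, RCLike.smul_re, ← frobenius_norm_sq_eq_re_trace,
    ← frobenius_norm_sq_eq_re_trace] at trace_gap_nonneg
  exact sub_nonneg.mp trace_gap_nonneg

lemma frobenius_norm_mul_conjTranspose_self_sub_le (X Z : Matrix m n 𝕜) :
    ‖X * Xᴴ - Z * Zᴴ‖ ≤ 2 * ‖Z * (X - Z)ᴴ‖ + ‖X - Z‖ ^ 2 := by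
  set E := X - Z with hE
  have expansion : X * Xᴴ - Z * Zᴴ = Z * Eᴴ + (Z * Eᴴ)ᴴ + E * Eᴴ := by
    simp only [hE, conjTranspose_mul, conjTranspose_conjTranspose, conjTranspose_sub,
      Matrix.mul_sub, Matrix.sub_mul]
    abel
  calc ‖X * Xᴴ - Z * Zᴴ‖ ≤ ‖Z * Eᴴ‖ + ‖(Z * Eᴴ)ᴴ‖ + ‖E * Eᴴ‖ := expansion ▸ norm_add₃_le
    _ ≤ ‖Z * Eᴴ‖ + ‖Z * Eᴴ‖ + ‖E‖ * ‖Eᴴ‖ :=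
      add_le_add_three le_rfl (frobenius_norm_conjTranspose _).le (frobenius_norm_mul E Eᴴ)
    _ = 2 * ‖Z * Eᴴ‖ + ‖E‖ ^ 2 := by
      rw [frobenius_norm_conjTranspose]
      ring

lemma le_algebraMap_of_eigenvalues_le [DecidableEq n] {A : Matrix n n 𝕜} (hA : A.IsHermitian)
    {c : ℝ} (hc : ∀ i, hA.eigenvalues i ≤ c) : A ≤ algebraMap ℝ _ c := by
  refine le_algebraMap_of_spectrum_le (fun x hx ↦ ?_) hA
  obtain ⟨i, rfl⟩ := hA.spectrum_real_eq_range_eigenvalues ▸ hx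
  exact hc i

lemma isCompact_unitaryGroup [DecidableEq n] :
    IsCompact (unitaryGroup n 𝕜 : Set (Matrix n n 𝕜)) := by
  have isCompact_box : IsCompact
      (Set.univ.pi fun _ ↦ Set.univ.pi fun _ ↦ Metric.closedBall 0 1 : Set (Matrix n n 𝕜)) :=
    isCompact_univ_pi fun _ ↦ isCompact_univ_pi fun _ ↦ isCompact_closedBall 0 1
  refine isCompact_box.of_isClosed_subset (isClosed_unitary (R := Matrix n n 𝕜))
    fun U hU i _ j _ ↦ ?_
  exact mem_closedBall_zero_iff.mpr (entry_norm_bound_of_unitary hU i j)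

end Matrices

section SingularValues

open scoped MatrixOrder

variable {n p r : ℕ}

lemma eigenvalues_le_eigVal_one {A : Matrix (Fin n) (Fin n) ℝ} (hA : A.IsHermitian) (i : Fin n) :
    hA.eigenvalues i ≤ eigVal A 1 := by
  have last_lt : n - 1 < n := by have := i.isLt; omega
  rw [eigVal, dif_pos hA, dif_pos last_lt]
  have index_le_last : (Tuple.sort hA.eigenvalues).symm i ≤ ⟨n - 1, last_lt⟩ :=
    Fin.le_def.mpr (Nat.le_sub_one_of_lt (Fin.isLt _))
  simpa using Tuple.monotone_sort hA.eigenvalues index_le_last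

lemma eigVal_nonneg {A : Matrix (Fin n) (Fin n) ℝ} (hA : A.PosSemidef) (i : ℕ) :
    0 ≤ eigVal A i := by
  rw [eigVal, dif_pos hA.isHermitian]
  split_ifs
  exacts [hA.eigenvalues_nonneg _, le_rfl]

lemma eigVal_le_eigVal_one {A : Matrix (Fin n) (Fin n) ℝ} (hA : A.PosSemidef) (i : ℕ) :
    eigVal A i ≤ eigVal A 1 := by
  rw [eigVal, dif_pos hA.isHermitian]
  split_ifs
  exacts [eigenvalues_le_eigVal_one _ _, eigVal_nonneg hA 1]

lemma posSemidef_transpose_mul_self {ι κ : Type*} [Fintype ι] [Finite κ] (A : Matrix ι κ ℝ) :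
    (Aᵀ * A).PosSemidef :=
  posSemidef_conjTranspose_mul_self A

lemma sval_nonneg (Y : Matrix (Fin p) (Fin r) ℝ) (i : ℕ) : 0 ≤ sval Y i :=
  Real.sqrt_nonneg _

lemma sval_le_sval_one (Y : Matrix (Fin p) (Fin r) ℝ) (i : ℕ) : sval Y i ≤ sval Y 1 :=
  Real.sqrt_le_sqrt (eigVal_le_eigVal_one (posSemidef_transpose_mul_self Y) i)

lemma transpose_mul_self_le_sval_one_sq (Y : Matrix (Fin p) (Fin r) ℝ) :
    Yᵀ * Y ≤ algebraMap ℝ _ (sval Y 1 ^ 2) := by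
  have psd := posSemidef_transpose_mul_self Y
  rw [sval, Real.sq_sqrt (eigVal_nonneg psd 1)]
  exact le_algebraMap_of_eigenvalues_le psd.isHermitian (eigenvalues_le_eigVal_one _)

end SingularValues

section QuotientDistance

open scoped Matrix.Norms.Frobenius

variable {p q r : ℕ}

lemma frob_eq_frobenius_norm (A : Matrix (Fin p) (Fin q) ℝ) : frob A = ‖A‖ := by
  simp only [frob, frobenius_norm_eq_sqrt, Real.norm_eq_abs, sq_abs]

lemma frobenius_norm_mul_le_sval_one (Y : Matrix (Fin p) (Fin r) ℝ)
    (B : Matrix (Fin r) (Fin q) ℝ) : ‖Y * B‖ ≤ sval Y 1 * ‖B‖ := by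
  refine le_of_sq_le_sq ?_ (mul_nonneg (sval_nonneg Y 1) (norm_nonneg B))
  rw [mul_pow]
  exact frobenius_norm_mul_sq_le_of_conjTranspose_mul_self_le
    (transpose_mul_self_le_sval_one_sq Y) B

lemma isOrtho_iff_mem_unitaryGroup {Q : Matrix (Fin r) (Fin r) ℝ} :
    IsOrtho Q ↔ Q ∈ unitaryGroup (Fin r) ℝ :=
  mem_unitaryGroup_iff'.symm

lemma exists_isOrtho_dOrth_eq (Y₁ Y₂ : Matrix (Fin p) (Fin r) ℝ) :
    ∃ Q : Matrix (Fin r) (Fin r) ℝ, IsOrtho Q ∧ dOrth Y₁ Y₂ = frob (Y₂ * Q - Y₁) := by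
  have continuous_dist : Continuous fun Q : Matrix (Fin r) (Fin r) ℝ ↦ frob (Y₂ * Q - Y₁) := by
    simp only [frob_eq_frobenius_norm]
    fun_prop
  obtain ⟨Q, hQ, sInf_eq⟩ := (isCompact_unitaryGroup (n := Fin r) (𝕜 := ℝ)).exists_sInf_image_eq
    ⟨1, one_mem _⟩ continuous_dist.continuousOn
  refine ⟨Q, isOrtho_iff_mem_unitaryGroup.mpr hQ, ?_⟩
  simpa only [dOrth, Set.image, SetLike.mem_coe, isOrtho_iff_mem_unitaryGroup, eq_comm]
    using sInf_eq

lemma dOrth_nonneg (Y₁ Y₂ : Matrix (Fin p) (Fin r) ℝ) : 0 ≤ dOrth Y₁ Y₂ := by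
  obtain ⟨Q, -, dist_eq⟩ := exists_isOrtho_dOrth_eq Y₁ Y₂
  rw [dist_eq, frob_eq_frobenius_norm]
  exact norm_nonneg _

lemma frob_mul_transpose_self_sub_le_of_isOrtho (Y₁ Y₂ : Matrix (Fin p) (Fin r) ℝ)
    {Q : Matrix (Fin r) (Fin r) ℝ} (hQ : IsOrtho Q) :
    frob (Y₁ * Y₁ᵀ - Y₂ * Y₂ᵀ) ≤
      2 * sval Y₂ 1 * frob (Y₂ * Q - Y₁) + frob (Y₂ * Q - Y₁) ^ 2 := by
  have gram_eq : Y₂ * Q * (Y₂ * Q)ᵀ = Y₂ * Y₂ᵀ := by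
    rw [transpose_mul, Matrix.mul_assoc, ← Matrix.mul_assoc Q, mul_eq_one_comm.mp hQ,
      Matrix.one_mul]
  have cross_le : ‖Y₂ * Q * (Y₁ - Y₂ * Q)ᵀ‖ ≤ sval Y₂ 1 * ‖Y₁ - Y₂ * Q‖ :=
    calc ‖Y₂ * Q * (Y₁ - Y₂ * Q)ᵀ‖ = ‖Y₂ * (Q * (Y₁ - Y₂ * Q)ᵀ)‖ := by rw [Matrix.mul_assoc]
      _ ≤ sval Y₂ 1 * ‖Q * (Y₁ - Y₂ * Q)ᵀ‖ := frobenius_norm_mul_le_sval_one _ _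
      _ = sval Y₂ 1 * ‖Y₁ - Y₂ * Q‖ := by
        rw [frobenius_norm_mul_of_conjTranspose_mul_self_eq_one hQ, frobenius_norm_transpose]
  simp only [frob_eq_frobenius_norm, norm_sub_rev (Y₂ * Q) Y₁]
  calc ‖Y₁ * Y₁ᵀ - Y₂ * Y₂ᵀ‖ = ‖Y₁ * Y₁ᵀ - Y₂ * Q * (Y₂ * Q)ᵀ‖ := by rw [gram_eq]
    _ ≤ 2 * ‖Y₂ * Q * (Y₁ - Y₂ * Q)ᵀ‖ + ‖Y₁ - Y₂ * Q‖ ^ 2 :=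
      frobenius_norm_mul_conjTranspose_self_sub_le Y₁ (Y₂ * Q)
    _ ≤ 2 * sval Y₂ 1 * ‖Y₁ - Y₂ * Q‖ + ‖Y₁ - Y₂ * Q‖ ^ 2 := by
      rw [mul_assoc 2]
      gcongr

lemma frob_mul_transpose_self_sub_le (Y₁ Y₂ : Matrix (Fin p) (Fin r) ℝ) :
    frob (Y₁ * Y₁ᵀ - Y₂ * Y₂ᵀ) ≤ 2 * sval Y₂ 1 * dOrth Y₁ Y₂ + dOrth Y₁ Y₂ ^ 2 := by
  obtain ⟨Q, hQ, dist_eq⟩ := exists_isOrtho_dOrth_eq Y₁ Y₂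
  exact dist_eq ▸ frob_mul_transpose_self_sub_le_of_isOrtho Y₁ Y₂ hQ

end QuotientDistance

theorem stmt19_general {p r : ℕ} (Y₁ Y₂ : Matrix (Fin p) (Fin r) ℝ)
    (hd : dOrth Y₁ Y₂ ≤ sval Y₂ 1 / 3) :
    frob (Y₁ * Y₁ᵀ - Y₂ * Y₂ᵀ) ≤ (7 / 3) * sval Y₂ 1 * dOrth Y₁ Y₂ :=
  calc frob (Y₁ * Y₁ᵀ - Y₂ * Y₂ᵀ)
      ≤ 2 * sval Y₂ 1 * dOrth Y₁ Y₂ + dOrth Y₁ Y₂ * dOrth Y₁ Y₂ :=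
        sq (dOrth Y₁ Y₂) ▸ frob_mul_transpose_self_sub_le Y₁ Y₂
    _ ≤ 2 * sval Y₂ 1 * dOrth Y₁ Y₂ + sval Y₂ 1 / 3 * dOrth Y₁ Y₂ := by
        gcongr
        exact dOrth_nonneg Y₁ Y₂
    _ = (7 / 3) * sval Y₂ 1 * dOrth Y₁ Y₂ := by ring

/-- local Lipschitz bound for the map from factors to PSD matrices:
if the quotient distance between `Y₁` and `Y₂` is at most `σ_r(Y₂)/3`, then
`‖Y₁Y₁ᵀ - Y₂Y₂ᵀ‖_F ≤ (7/3)‖Y₂‖ d(Y₁,Y₂)`. -/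
theorem stmt19 {p r : ℕ} (Y₁ Y₂ : Matrix (Fin p) (Fin r) ℝ)
    (hY₁ : Y₁.rank = r) (hY₂ : Y₂.rank = r)
    (hd : dOrth Y₁ Y₂ ≤ sval Y₂ r / 3) :
    frob (Y₁ * Y₁ᵀ - Y₂ * Y₂ᵀ) ≤ (7 / 3) * sval Y₂ 1 * dOrth Y₁ Y₂ := by
  have hd_one : dOrth Y₁ Y₂ ≤ sval Y₂ 1 / 3 := hd.trans (by gcongr; exact sval_le_sval_one Y₂ r)
  exact stmt19_general Y₁ Y₂ hd_one
end
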